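/- Let α ∈ (3/2, 2), T > 0, let (λ_n)_{n≥1} be a sequence of positive reals, and let (a_n), (b_n) ∈ ℓ²(ℕ). Then the map t ↦ (a_n t E_{α,2}(−λ_n t^α) + b_n E_α(−λ_n t^α))_{n≥1} is continuous from [0,T] into ℓ²(ℕ), and its value at t = 0 is the sequence (b_n)_{n≥1}. (In the PDE setting this says that I_{0+}^{2−α} u ∈ C([0,T]; L²(Ω)) for the weak solution u of the Riemann–Liouville fractional wave equation, and that the initial condition D_{0+}^{α−2} u(0,·) = u₂ holds.) -/

import Mathlib

/-- The Mittag-Leffler function of real parameters `α, β > 0` at a real argument: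
`E_{α,β}(x) = Σ_{k=0}^∞ x^k / Γ(αk + β)`. -/
noncomputable def mittagLeffler (α β x : ℝ) : ℝ :=
  ∑' k : ℕ, x ^ k / Real.Gamma (α * k + β)

open MeasureTheory Set Filter Topology

lemma ml_coef {α b : ℝ} (hα : 1 < α) (hb : 1 ≤ b) :
    ∃ C, 0 ≤ C ∧ ∀ k : ℕ, 1 / Real.Gamma (α * k + b) ≤ C / (k.factorial : ℝ) := by
  have hG : 0 < Real.Gamma b := Real.Gamma_pos_of_pos (by linarith)
  refine ⟨1 + 1 / Real.Gamma b, by positivity, fun k => ?_⟩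
  rcases Nat.eq_zero_or_pos k with rfl | hk
  · simp
  · have hk' : (1 : ℝ) ≤ k := by exact_mod_cast hk
    have h1 : (k.factorial : ℝ) ≤ Real.Gamma (α * k + b) := by
      rw [← Real.Gamma_nat_eq_factorial]
      apply Real.Gamma_strictMonoOn_Ici.monotoneOn
      · simp only [mem_Ici]; linarith
      · simp only [mem_Ici]; nlinarith
      · nlinarith
    have hf : (0 : ℝ) < k.factorial := by positivity
    calc 1 / Real.Gamma (α * k + b) ≤ 1 / (k.factorial : ℝ) := by gcongr
      _ ≤ _ := by
        gcongr
        have : 0 < 1 / Real.Gamma b := by positivity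
        linarith

lemma ml_gamma_pos {α b : ℝ} (hα : 1 < α) (hb : 1 ≤ b) (k : ℕ) :
    0 < Real.Gamma (α * k + b) := by
  apply Real.Gamma_pos_of_pos; positivity

lemma ml_summable {α b : ℝ} (hα : 1 < α) (hb : 1 ≤ b) (R : ℝ) (hR : 0 ≤ R) :
    Summable (fun k : ℕ => R ^ k / Real.Gamma (α * k + b)) := by
  obtain ⟨C, hC, h⟩ := ml_coef hα hb
  refine Summable.of_nonneg_of_le (f := fun k : ℕ => C * (R ^ k / k.factorial)) ?_ ?_ ?_
  · intro k; have := ml_gamma_pos hα hb k; positivity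
  · intro k
    have := mul_le_mul_of_nonneg_left (h k) (pow_nonneg hR k)
    calc _ = R ^ k * (1 / Real.Gamma (α * k + b)) := by ring
      _ ≤ _ := this
      _ = _ := by ring
  · exact (Real.summable_pow_div_factorial R).mul_left C

lemma ml_norm {α b : ℝ} (hα : 1 < α) (hb : 1 ≤ b) (x : ℝ) (k : ℕ) :
    ‖x ^ k / Real.Gamma (α * k + b)‖ = |x| ^ k / Real.Gamma (α * k + b) := by
  rw [norm_div, norm_pow, Real.norm_eq_abs, Real.norm_eq_abs, abs_of_pos (ml_gamma_pos hα hb k)]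

lemma ml_hasSum {α b : ℝ} (hα : 1 < α) (hb : 1 ≤ b) (x : ℝ) :
    HasSum (fun k : ℕ => x ^ k / Real.Gamma (α * k + b)) (mittagLeffler α b x) := by
  apply Summable.hasSum
  apply Summable.of_norm
  simp_rw [ml_norm hα hb]
  exact ml_summable hα hb _ (abs_nonneg x)

lemma ml_continuous {α b : ℝ} (hα : 1 < α) (hb : 1 ≤ b) :
    Continuous (mittagLeffler α b) := by
  rw [continuous_iff_continuousAt]
  intro x
  have : ContinuousOn (fun x => ∑' k : ℕ, x ^ k / Real.Gamma (α * k + b))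
      (Metric.ball 0 (|x| + 1)) := by
    apply continuousOn_tsum (u := fun k : ℕ => (|x| + 1) ^ k / Real.Gamma (α * k + b))
    · intro k; fun_prop
    · exact ml_summable hα hb _ (by positivity)
    · intro k y hy
      rw [ml_norm hα hb]
      have := ml_gamma_pos hα hb k
      have hy' : |y| < |x| + 1 := by simpa using hy
      gcongr
  apply this.continuousAt
  apply Metric.isOpen_ball.mem_nhds
  simp

lemma real_beta {p q s : ℝ} (hp : 0 < p) (hq : 0 < q) (hs : 0 < s) :
    ∫ r in (0:ℝ)..s, r ^ (p - 1) * (s - r) ^ (q - 1)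
      = s ^ (p + q - 1) * (Real.Gamma p * Real.Gamma q / Real.Gamma (p + q)) := by
  have h1 := Complex.betaIntegral_scaled (p : ℂ) (q : ℂ) hs
  have h2 := Complex.Gamma_mul_Gamma_eq_betaIntegral (s := (p : ℂ)) (t := (q : ℂ))
    (by simpa) (by simpa)
  have h3 : Real.Gamma (p + q) ≠ 0 := (Real.Gamma_pos_of_pos (by positivity)).ne'
  have h4 : Complex.betaIntegral p q
      = ((Real.Gamma p * Real.Gamma q / Real.Gamma (p + q) : ℝ) : ℂ) := by
    push_cast
    rw [eq_div_iff (by exact_mod_cast h3), ← Complex.Gamma_ofReal, ← Complex.Gamma_ofReal,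
      ← Complex.Gamma_ofReal, h2]
    push_cast
    ring
  rw [h4] at h1
  apply Complex.ofReal_injective
  rw [← intervalIntegral.integral_ofReal, Complex.ofReal_mul, Complex.ofReal_cpow hs.le]
  push_cast at h1 ⊢
  rw [← h1]
  apply intervalIntegral.integral_congr
  intro r hr
  rw [uIcc_of_le hs.le] at hr
  simp only
  rw [Complex.ofReal_cpow hr.1, Complex.ofReal_cpow (by linarith [hr.2])]
  push_cast
  rfl

lemma real_beta_integrable {p q s : ℝ} (hp : 0 < p) (hq : 0 < q) (hs : 0 < s) :
    IntegrableOn (fun r : ℝ => r ^ (p - 1) * (s - r) ^ (q - 1)) (Ioc 0 s) := by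
  apply Integrable.of_integral_ne_zero
  rw [← intervalIntegral.integral_of_le hs.le, real_beta hp hq hs]
  have := Real.Gamma_pos_of_pos hp
  have := Real.Gamma_pos_of_pos hq
  have := Real.Gamma_pos_of_pos (add_pos hp hq)
  positivity

lemma ml_frac_int {α b q s : ℝ} (hα : 1 < α) (hb : 1 ≤ b) (hq : 0 < q) (hs : 0 < s) :
    ∫ r in (0:ℝ)..s, (s - r) ^ (q - 1) * (r ^ (b - 1) * mittagLeffler α b (-(r ^ α)))
      = Real.Gamma q * s ^ (b + q - 1) * mittagLeffler α (b + q) (-(s ^ α)) := by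
  have hGq := Real.Gamma_pos_of_pos hq
  have hp : ∀ k : ℕ, 0 < α * k + b := fun k => by positivity
  have hGp : ∀ k : ℕ, 0 < Real.Gamma (α * k + b) := ml_gamma_pos hα hb
  have hGpq : ∀ k : ℕ, 0 < Real.Gamma (α * k + (b + q)) :=
    ml_gamma_pos hα (by linarith)
  set F : ℕ → ℝ → ℝ := fun k r =>
    ((-1) ^ k / Real.Gamma (α * k + b)) * (r ^ (α * k + b - 1) * (s - r) ^ (q - 1)) with hF
  have hpow : ∀ k : ℕ, s ^ (α * k + b + q - 1) = s ^ (b + q - 1) * (s ^ α) ^ k := by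
    intro k
    rw [← Real.rpow_natCast, ← Real.rpow_mul hs.le, ← Real.rpow_add hs]
    congr 1; ring
  have hint : ∀ k, ∫ r in Ioc 0 s, F k r
      = (Real.Gamma q * s ^ (b + q - 1)) * ((-(s ^ α)) ^ k / Real.Gamma (α * k + (b + q))) := by
    intro k
    rw [← intervalIntegral.integral_of_le hs.le, intervalIntegral.integral_const_mul,
      real_beta (hp k) hq hs, hpow, neg_pow (s ^ α), add_assoc (α * k) b q]
    have := (hGp k).ne'
    field_simp
  have hnorm : ∀ k, ∫ r in Ioc 0 s, ‖F k r‖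
      = (Real.Gamma q * s ^ (b + q - 1)) * ((s ^ α) ^ k / Real.Gamma (α * k + (b + q))) := by
    intro k
    have : ∫ r in Ioc 0 s, ‖F k r‖ = ∫ r in Ioc 0 s,
        (1 / Real.Gamma (α * k + b)) * (r ^ (α * k + b - 1) * (s - r) ^ (q - 1)) := by
      apply setIntegral_congr_fun measurableSet_Ioc
      intro r hr
      have h1 : 0 ≤ r := hr.1.le
      have h2 : 0 ≤ s - r := by linarith [hr.2]
      have h3 := hGp k
      simp only [hF, norm_mul, norm_div, norm_pow, norm_neg, norm_one, one_pow]
      rw [Real.norm_of_nonneg h3.le, Real.norm_of_nonneg (by positivity),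
        Real.norm_of_nonneg (by positivity)]
    rw [this, ← intervalIntegral.integral_of_le hs.le, intervalIntegral.integral_const_mul,
      real_beta (hp k) hq hs, hpow, add_assoc (α * k) b q]
    have := (hGp k).ne'
    field_simp
  have key := hasSum_integral_of_summable_integral_norm (μ := volume.restrict (Ioc 0 s)) (F := F)
    (fun k => (real_beta_integrable (hp k) hq hs).const_mul _)
    (by
      simp_rw [hnorm]
      exact (ml_summable hα (by linarith) _ (by positivity)).mul_left _)
  simp_rw [hint] at key
  have key2 := (ml_hasSum hα (b := b + q) (by linarith) (-(s ^ α))).mul_left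
    (Real.Gamma q * s ^ (b + q - 1))
  rw [← key.unique key2, intervalIntegral.integral_of_le hs.le]
  apply setIntegral_congr_fun measurableSet_Ioc
  intro r hr
  simp only [hF]
  have := (ml_hasSum hα hb (-(r ^ α))).mul_left ((s - r) ^ (q - 1) * r ^ (b - 1))
  rw [← mul_assoc, ← this.tsum_eq]
  congr 1
  ext k
  have : r ^ (α * k + b - 1) = r ^ (b - 1) * (r ^ α) ^ k := by
    rw [← Real.rpow_natCast, ← Real.rpow_mul hr.1.le, ← Real.rpow_add hr.1]
    congr 1; ring
  rw [this, neg_pow (r ^ α)]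
  ring

noncomputable def yK (u : ℝ → ℝ) (w s : ℝ) : ℝ :=
  ∫ r in (0:ℝ)..s, Real.exp (-((s - r) * w)) * u r

lemma yK_continuous {u : ℝ → ℝ} (hu : Continuous u) :
    Continuous (fun p : ℝ × ℝ => yK u p.2 p.1) := by
  unfold yK
  apply intervalIntegral.continuous_parametric_intervalIntegral_of_continuous
    (f := fun (p : ℝ × ℝ) r => Real.exp (-((p.1 - r) * p.2)) * u r)
  · simp only [Function.uncurry_def]; fun_prop
  · fun_prop

lemma yK_deriv {u : ℝ → ℝ} (hu : Continuous u) (w s : ℝ) :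
    HasDerivAt (yK u w) (u s - w * yK u w s) s := by
  have e : ∀ s, yK u w s = Real.exp (-(s * w)) * ∫ r in (0:ℝ)..s, Real.exp (r * w) * u r := by
    intro s
    rw [yK, ← intervalIntegral.integral_const_mul]
    congr 1
    ext r
    rw [← mul_assoc, ← Real.exp_add]
    congr 2; ring
  have h1 : HasDerivAt (fun s => ∫ r in (0:ℝ)..s, Real.exp (r * w) * u r)
      (Real.exp (s * w) * u s) s := by
    have hc : Continuous fun r => Real.exp (r * w) * u r := by fun_prop
    exact hc.deriv_integral _ 0 s ▸ (hc.integral_hasStrictDerivAt 0 s).hasDerivAt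
  have h2 : HasDerivAt (fun s : ℝ => Real.exp (-(s * w))) (Real.exp (-(s * w)) * (-(1 * w))) s :=
    (((hasDerivAt_id s).mul_const w).neg).exp
  have h3 := h2.mul h1
  have e' : yK u w = (fun s : ℝ => Real.exp (-(s * w))) *
      (fun s => ∫ r in (0:ℝ)..s, Real.exp (r * w) * u r) := by
    ext s; rw [e]; rfl
  rw [e']
  refine h3.congr_deriv ?_
  simp only [Pi.mul_apply]
  have : Real.exp (-(s * w)) * Real.exp (s * w) = 1 := by rw [← Real.exp_add]; simp
  linear_combination (u s) * this

lemma yK_pos {u : ℝ → ℝ} (hu : Continuous u) {w t : ℝ} (hw : 0 ≤ w) (ht : 0 ≤ t) :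
    0 ≤ ∫ s in (0:ℝ)..t, u s * yK u w s := by
  have hy : Continuous (yK u w) :=
    (yK_continuous hu).comp (by fun_prop : Continuous fun s : ℝ => (s, w))
  have h := intervalIntegral.integral_eq_sub_of_hasDerivAt (a := 0) (b := t)
    (f := fun s => yK u w s ^ 2 / 2) (f' := fun s => u s * yK u w s - w * yK u w s ^ 2)
    (fun s _ => by
      have := ((yK_deriv hu w s).pow 2).div_const 2
      refine this.congr_deriv ?_
      simp
      ring)
    (by apply Continuous.intervalIntegrable; fun_prop)
  rw [intervalIntegral.integral_sub (by apply Continuous.intervalIntegrable; fun_prop)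
    (by apply Continuous.intervalIntegrable; fun_prop)] at h
  have h0 : yK u w 0 = 0 := by simp [yK]
  have h1 : 0 ≤ ∫ s in (0:ℝ)..t, w * yK u w s ^ 2 :=
    intervalIntegral.integral_nonneg ht (fun s _ => by positivity)
  simp only [h0] at h
  nlinarith [sq_nonneg (yK u w t)]

lemma yK_bound {u : ℝ → ℝ} {M w s t : ℝ} (hM : ∀ r ∈ Icc 0 t, |u r| ≤ M)
    (hw : 0 < w) (hs : 0 ≤ s) (hst : s ≤ t) : |yK u w s| ≤ M * t ∧ |yK u w s| ≤ M * w⁻¹ := by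
  have hM0 : 0 ≤ M := (abs_nonneg _).trans (hM 0 ⟨le_rfl, hs.trans hst⟩)
  constructor
  · have := intervalIntegral.norm_integral_le_of_norm_le_const (a := 0) (b := s) (C := M)
      (f := fun r => Real.exp (-((s - r) * w)) * u r) (by
        intro r hr
        rw [uIoc_of_le hs] at hr
        rw [norm_mul, Real.norm_eq_abs, Real.norm_eq_abs, Real.abs_exp]
        have h1 : Real.exp (-((s - r) * w)) ≤ 1 := by
          rw [Real.exp_le_one_iff]
          have := mul_nonneg (sub_nonneg.2 hr.2) hw.le
          linarith
        have h2 := hM r ⟨hr.1.le, hr.2.trans hst⟩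
        calc _ ≤ 1 * M := by gcongr
          _ = M := one_mul _)
    rw [Real.norm_eq_abs, sub_zero, abs_of_nonneg hs] at this
    exact this.trans (by gcongr)
  · have h1 : ∫ r in (0:ℝ)..s, M * Real.exp (-((s - r) * w))
        = M * w⁻¹ * Real.exp (-((s - s) * w)) - M * w⁻¹ * Real.exp (-((s - 0) * w)) := by
      apply intervalIntegral.integral_eq_sub_of_hasDerivAt
        (f := fun r => M * w⁻¹ * Real.exp (-((s - r) * w)))
      · intro r _
        have := ((((hasDerivAt_id r).const_sub s).mul_const w).neg.exp).const_mul (M * w⁻¹)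
        refine this.congr_deriv ?_
        simp
        field_simp
      · apply Continuous.intervalIntegrable; fun_prop
    have := intervalIntegral.norm_integral_le_of_norm_le (μ := volume) (a := 0) (b := s) hs
      (f := fun r => Real.exp (-((s - r) * w)) * u r)
      (g := fun r => M * Real.exp (-((s - r) * w))) (by
        filter_upwards with r hr
        rw [norm_mul, Real.norm_eq_abs, Real.norm_eq_abs, Real.abs_exp, mul_comm]
        have h2 := hM r ⟨hr.1.le, hr.2.trans hst⟩
        gcongr) (by apply Continuous.intervalIntegrable; fun_prop)
    rw [h1, Real.norm_eq_abs] at this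
    refine this.trans ?_
    have : 0 ≤ M * w⁻¹ * Real.exp (-((s - 0) * w)) := by positivity
    simp only [sub_self, zero_mul, neg_zero, Real.exp_zero, mul_one]
    linarith

lemma exp_int {q c : ℝ} (hq1 : q < 1) (hc : 0 < c) :
    ∫ w in Ioi (0:ℝ), w ^ (-q) * Real.exp (-(c * w)) = c ^ (q - 1) * Real.Gamma (1 - q) := by
  have := Real.integral_rpow_mul_exp_neg_mul_Ioi (a := 1 - q) (by linarith) hc
  rw [show (1 - q - 1) = -q by ring] at this
  rw [this, one_div, Real.inv_rpow hc.le, ← Real.rpow_neg hc.le]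
  congr 2; ring

lemma K_diffusive {u : ℝ → ℝ} (hu : Continuous u) {q s : ℝ} (hq0 : 0 < q) (hq1 : q < 1)
    (hs : 0 < s) :
    Real.Gamma (1 - q) * ∫ r in (0:ℝ)..s, (s - r) ^ (q - 1) * u r
      = ∫ w in Ioi (0:ℝ), w ^ (-q) * yK u w s := by
  have hG : 0 < Real.Gamma (1 - q) := Real.Gamma_pos_of_pos (by linarith)
  set f : ℝ → ℝ → ℝ := fun r w => w ^ (-q) * Real.exp (-((s - r) * w)) * u r with hf
  have hmeas : AEStronglyMeasurable (Function.uncurry f)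
      ((volume.restrict (Ioo 0 s)).prod (volume.restrict (Ioi 0))) := by
    apply Measurable.aestronglyMeasurable
    have := hu.measurable
    simp only [hf, Function.uncurry_def]
    fun_prop
  have hi : ∀ r ∈ Ioo 0 s, IntegrableOn (fun w : ℝ => w ^ (-q) * Real.exp (-((s - r) * w)))
      (Ioi 0) := by
    intro r hr
    have : 0 < s - r := by linarith [hr.2]
    apply Integrable.of_integral_ne_zero
    rw [exp_int hq1 this]
    positivity
  have hint : Integrable (Function.uncurry f)
      ((volume.restrict (Ioo 0 s)).prod (volume.restrict (Ioi 0))) := by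
    rw [integrable_prod_iff hmeas]
    constructor
    · filter_upwards [ae_restrict_mem measurableSet_Ioo] with r hr
      exact (hi r hr).mul_const (u r)
    · have hI : IntegrableOn (fun r => (s - r) ^ (q - 1) * |u r|) (Ioo 0 s) := by
        have h1 : IntegrableOn (fun r => (s - r) ^ (q - 1)) (Ioc 0 s) := by
          simpa using real_beta_integrable (p := 1) one_pos hq0 hs
        rw [← integrableOn_Icc_iff_integrableOn_Ioc] at h1
        exact (h1.mul_continuousOn (hu.abs.continuousOn) isCompact_Icc).mono_set Ioo_subset_Icc_self
      refine (hI.mul_const (Real.Gamma (1 - q))).congr ?_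
      filter_upwards [ae_restrict_mem measurableSet_Ioo] with r hr
      have h0 : 0 < s - r := by linarith [hr.2]
      have : ∫ w in Ioi (0:ℝ), ‖Function.uncurry f (r, w)‖
          = ∫ w in Ioi (0:ℝ), (w ^ (-q) * Real.exp (-((s - r) * w))) * |u r| := by
        apply setIntegral_congr_fun measurableSet_Ioi
        intro w hw
        have hw' : (0:ℝ) < w := hw
        simp only [hf, Function.uncurry]
        rw [norm_mul, Real.norm_of_nonneg (by positivity), Real.norm_eq_abs]
      rw [this, integral_mul_const, exp_int hq1 h0]
      ring
  have sw := integral_integral_swap hint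
  have l : ∫ r in Ioo 0 s, ∫ w in Ioi (0:ℝ), f r w
      = Real.Gamma (1 - q) * ∫ r in (0:ℝ)..s, (s - r) ^ (q - 1) * u r := by
    rw [intervalIntegral.integral_of_le hs.le, integral_Ioc_eq_integral_Ioo, ← integral_const_mul]
    apply setIntegral_congr_fun measurableSet_Ioo
    intro r hr
    have h0 : 0 < s - r := by linarith [hr.2]
    simp only [hf]
    rw [integral_mul_const, exp_int hq1 h0]
    ring
  rw [← l, sw]
  congr 1
  ext w
  rw [yK, intervalIntegral.integral_of_le hs.le, integral_Ioc_eq_integral_Ioo, ← integral_const_mul]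
  congr 1
  ext r
  simp only [hf]
  ring

lemma K_pos {u : ℝ → ℝ} (hu : Continuous u) {q t : ℝ} (hq0 : 0 < q) (hq1 : q < 1)
    (ht : 0 < t) :
    0 ≤ ∫ s in (0:ℝ)..t, u s * ∫ r in (0:ℝ)..s, (s - r) ^ (q - 1) * u r := by
  have hG : 0 < Real.Gamma (1 - q) := Real.Gamma_pos_of_pos (by linarith)
  obtain ⟨M, hM⟩ := (isCompact_Icc (a := (0:ℝ)) (b := t)).exists_bound_of_continuousOn
    hu.continuousOn
  simp only [Real.norm_eq_abs] at hM
  have hM0 : 0 ≤ M := (abs_nonneg _).trans (hM 0 ⟨le_rfl, ht.le⟩)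
  set f : ℝ → ℝ → ℝ := fun s w => u s * (w ^ (-q) * yK u w s) with hf
  set h : ℝ → ℝ := fun w => w ^ (-q) * min t w⁻¹ with hh
  have hhm : Measurable h := by simp only [hh]; fun_prop
  have hhi : IntegrableOn h (Ioi 0) := by
    rw [← Ioc_union_Ioi_eq_Ioi (zero_le_one (α := ℝ))]
    apply IntegrableOn.union
    · have h1 : IntegrableOn (fun w : ℝ => w ^ (-q) * t) (Ioc 0 1) := by
        have := (intervalIntegral.intervalIntegrable_rpow' (a := 0) (b := 1) (r := -q)
          (by linarith))
        rw [intervalIntegrable_iff_integrableOn_Ioc_of_le zero_le_one] at this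
        exact this.mul_const t
      refine Integrable.mono' h1 hhm.aestronglyMeasurable ?_
      filter_upwards [ae_restrict_mem measurableSet_Ioc] with w hw
      have hw0 : 0 < w := hw.1
      have : 0 ≤ min t w⁻¹ := le_min ht.le (by positivity)
      rw [Real.norm_of_nonneg (by positivity)]
      simp only [hh]
      gcongr
      exact min_le_left _ _
    · have h1 : IntegrableOn (fun w : ℝ => w ^ (-q - 1)) (Ioi 1) :=
        integrableOn_Ioi_rpow_of_lt (by linarith) one_pos
      refine Integrable.mono' h1 hhm.aestronglyMeasurable ?_
      filter_upwards [ae_restrict_mem measurableSet_Ioi] with w hw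
      have hw0 : 0 < w := lt_trans one_pos hw
      have : 0 ≤ min t w⁻¹ := le_min ht.le (by positivity)
      rw [Real.norm_of_nonneg (by positivity), Real.rpow_sub_one hw0.ne', div_eq_mul_inv]
      simp only [hh]
      gcongr
      exact min_le_right _ _
  have hint : Integrable (Function.uncurry f)
      ((volume.restrict (Ioc 0 t)).prod (volume.restrict (Ioi 0))) := by
    have hb : Integrable (fun p : ℝ × ℝ => (M * M) * h p.2)
        ((volume.restrict (Ioc 0 t)).prod (volume.restrict (Ioi 0))) :=
      Integrable.mul_prod (f := fun _ => M * M) (integrable_const _) hhi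
    refine hb.mono' ?_ ?_
    · apply Measurable.aestronglyMeasurable
      have := hu.measurable
      have := (yK_continuous hu).measurable
      simp only [hf, Function.uncurry_def]
      fun_prop
    · rw [Measure.prod_restrict]
      filter_upwards [ae_restrict_mem (measurableSet_Ioc.prod measurableSet_Ioi)] with p hp
      have hw : 0 < p.2 := hp.2
      have hb := yK_bound hM hw hp.1.1.le hp.1.2
      have h1 := hM p.1 ⟨hp.1.1.le, hp.1.2⟩
      simp only [hf, hh, Function.uncurry]
      rw [norm_mul, norm_mul, Real.norm_eq_abs, Real.norm_eq_abs, Real.norm_eq_abs,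
        abs_of_nonneg (by positivity : 0 ≤ p.2 ^ (-q)), mul_assoc]
      have h2 : |yK u p.2 p.1| ≤ M * min t p.2⁻¹ := by
        rw [mul_min_of_nonneg _ _ hM0]
        exact le_min hb.1 hb.2
      calc |u p.1| * (p.2 ^ (-q) * |yK u p.2 p.1|)
          ≤ M * (p.2 ^ (-q) * (M * min t p.2⁻¹)) := by gcongr
        _ = _ := by ring
  have sw := integral_integral_swap hint
  have l : ∫ s in Ioc 0 t, ∫ w in Ioi (0:ℝ), f s w = Real.Gamma (1 - q) *
      ∫ s in (0:ℝ)..t, u s * ∫ r in (0:ℝ)..s, (s - r) ^ (q - 1) * u r := by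
    rw [intervalIntegral.integral_of_le ht.le, ← integral_const_mul]
    apply setIntegral_congr_fun measurableSet_Ioc
    intro s hs
    simp only [hf]
    rw [integral_const_mul, ← K_diffusive hu hq0 hq1 hs.1]
    ring
  have r0 : 0 ≤ ∫ w in Ioi (0:ℝ), ∫ s in Ioc 0 t, f s w := by
    apply setIntegral_nonneg measurableSet_Ioi
    intro w hw
    have hw' : (0:ℝ) < w := hw
    have : ∫ s in Ioc 0 t, f s w = w ^ (-q) * ∫ s in (0:ℝ)..t, u s * yK u w s := by
      rw [intervalIntegral.integral_of_le ht.le, ← integral_const_mul]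
      congr 1
      ext s
      simp only [hf]; ring
    rw [this]
    have := yK_pos hu hw'.le ht.le
    positivity
  rw [← sw, l] at r0
  exact nonneg_of_mul_nonneg_right r0 hG

lemma ml_shift {α : ℝ} (hα : 1 < α) (x : ℝ) :
    mittagLeffler α 1 (-x) = 1 - x * mittagLeffler α (α + 1) (-x) := by
  have h1 := ml_hasSum hα le_rfl (-x)
  have h2 := (ml_hasSum hα (b := α + 1) (by linarith) (-x)).mul_left (-x)
  have h3 := (hasSum_nat_add_iff' (f := fun k : ℕ => (-x) ^ k / Real.Gamma (α * k + 1)) 1).2 h1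
  have h4 : (fun k : ℕ => -x * ((-x) ^ k / Real.Gamma (α * k + (α + 1))))
      = fun k : ℕ => (-x) ^ (k + 1) / Real.Gamma (α * ((k + 1 : ℕ) : ℝ) + 1) := by
    ext k
    rw [pow_succ, show α * ((k + 1 : ℕ) : ℝ) + 1 = α * k + (α + 1) by push_cast; ring]
    ring
  rw [h4] at h2
  have := h3.unique h2
  simp at this
  linarith

lemma ml_bound_one {α : ℝ} (hα : 1 < α) (hα2 : α < 2) {x : ℝ} (hx : 0 ≤ x) :
    |mittagLeffler α 1 (-x)| ≤ 1 := by
  rcases hx.eq_or_lt with rfl | hx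
  · rw [ml_shift hα]; simp
  obtain ⟨t, ht, rfl⟩ : ∃ t : ℝ, 0 < t ∧ t ^ α = x :=
    ⟨x ^ (α⁻¹), by positivity, by rw [← Real.rpow_mul hx.le, inv_mul_cancel₀ (by linarith),
      Real.rpow_one]⟩
  have hpc : Continuous fun s : ℝ => s ^ α := Real.continuous_rpow_const (by linarith)
  have hpc' : Continuous fun s : ℝ => s ^ (α - 1) := Real.continuous_rpow_const (by linarith)
  set u : ℝ → ℝ := fun s => mittagLeffler α 1 (-(s ^ α)) with hu
  set g : ℝ → ℝ := fun s => s ^ (α - 1) * mittagLeffler α α (-(s ^ α)) with hg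
  have huc : Continuous u := (ml_continuous hα le_rfl).comp hpc.neg
  have hgc : Continuous g := hpc'.mul ((ml_continuous hα hα.le).comp hpc.neg)
  set v : ℝ → ℝ := fun s => 1 - ∫ r in (0:ℝ)..s, g r with hv
  have hvd : ∀ s, HasDerivAt v (-g s) s := fun s =>
    ((hgc.integral_hasStrictDerivAt 0 s).hasDerivAt).const_sub 1
  have huv : ∀ s, 0 < s → u s = v s := by
    intro s hs
    have := ml_frac_int hα hα.le one_pos hs
    simp only [sub_self, Real.rpow_zero, one_mul, Real.Gamma_one, add_sub_cancel_right] at this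
    simp only [hu, hv, hg]
    rw [this, ml_shift hα]
  have hvc : Continuous v := continuous_iff_continuousAt.2 fun s => (hvd s).continuousAt
  have hKg : ∀ s, 0 < s → ∫ r in (0:ℝ)..s, (s - r) ^ (α - 1 - 1) * u r
      = Real.Gamma (α - 1) * g s := by
    intro s hs
    have := ml_frac_int hα le_rfl (q := α - 1) (by linarith) hs
    simp only [sub_self, Real.rpow_zero, one_mul, add_sub_cancel] at this
    simp only [hu, hg]
    rw [this, mul_assoc]
  have hpos := K_pos huc (q := α - 1) (by linarith) (by linarith) ht
  have he : ∫ s in (0:ℝ)..t, u s * ∫ r in (0:ℝ)..s, (s - r) ^ (α - 1 - 1) * u r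
      = Real.Gamma (α - 1) * ∫ s in (0:ℝ)..t, v s * g s := by
    rw [intervalIntegral.integral_of_le ht.le, intervalIntegral.integral_of_le ht.le,
      ← integral_const_mul]
    apply setIntegral_congr_fun measurableSet_Ioc
    intro s hs
    simp only
    rw [hKg s hs.1, huv s hs.1]
    ring
  rw [he] at hpos
  have hpos' := nonneg_of_mul_nonneg_right hpos (Real.Gamma_pos_of_pos (by linarith))
  have hftc := intervalIntegral.integral_eq_sub_of_hasDerivAt (a := 0) (b := t)
    (f := fun s => -(v s ^ 2 / 2)) (f' := fun s => v s * g s)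
    (fun s _ => (((hvd s).pow 2).div_const 2).neg.congr_deriv (by simp; ring))
    (by apply Continuous.intervalIntegrable; fun_prop)
  have hv0 : v 0 = 1 := by simp [hv]
  rw [hftc, hv0] at hpos'
  change |u t| ≤ 1
  rw [huv t ht, ← sq_le_one_iff_abs_le_one]
  linarith

lemma ml_bound_two {α : ℝ} (hα : 1 < α) (hα2 : α < 2) {x : ℝ} (hx : 0 ≤ x) :
    |mittagLeffler α 2 (-x)| ≤ 1 := by
  rcases hx.eq_or_lt with rfl | hx
  · have h := ml_hasSum hα (b := 2) (by norm_num) (-0)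
    have h' := hasSum_single (f := fun k : ℕ => (-0 : ℝ) ^ k / Real.Gamma (α * k + 2)) 0
      (by intro k hk; simp [hk])
    rw [h.unique h']
    simp
  obtain ⟨t, ht, rfl⟩ : ∃ t : ℝ, 0 < t ∧ t ^ α = x :=
    ⟨x ^ (α⁻¹), by positivity, by rw [← Real.rpow_mul hx.le, inv_mul_cancel₀ (by linarith),
      Real.rpow_one]⟩
  have := ml_frac_int hα le_rfl one_pos ht
  rw [show (1:ℝ) + 1 - 1 = 1 by ring] at this
  simp only [sub_self, Real.rpow_zero, one_mul, Real.Gamma_one,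
    Real.rpow_one, one_add_one_eq_two] at this
  have hb := intervalIntegral.norm_integral_le_of_norm_le_const (a := 0) (b := t) (C := 1)
    (f := fun r => mittagLeffler α 1 (-(r ^ α))) (by
      intro r hr
      rw [uIoc_of_le ht.le] at hr
      exact ml_bound_one hα hα2 (Real.rpow_nonneg hr.1.le _))
  rw [this, norm_mul, Real.norm_eq_abs, Real.norm_eq_abs, sub_zero, abs_of_pos ht, one_mul] at hb
  exact le_of_mul_le_mul_left (by linarith) ht

/-- Let `α ∈ (3/2, 2)`, `T > 0`, `(λ_n)` positive reals and
`(a_n), (b_n) ∈ ℓ²(ℕ)`. Then the map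
`t ↦ (a_n t E_{α,2}(−λ_n t^α) + b_n E_α(−λ_n t^α))_n` is continuous from `[0,T]`
into `ℓ²(ℕ)`, and its value at `t = 0` is the sequence `(b_n)`. -/
theorem continuity_into_l2 (α T : ℝ) (hα1 : 3 / 2 < α) (hα2 : α < 2) (hT : 0 < T)
    (l : ℕ → ℝ) (hl : ∀ n, 0 < l n)
    (a b : lp (fun _ : ℕ => ℝ) 2) :
    ∃ f : ℝ → lp (fun _ : ℕ => ℝ) 2,
      ContinuousOn f (Set.Icc 0 T) ∧
      (∀ t ∈ Set.Icc (0 : ℝ) T, ∀ n : ℕ,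
        f t n = a n * t * mittagLeffler α 2 (-(l n) * t ^ α)
          + b n * mittagLeffler α 1 (-(l n) * t ^ α)) ∧
      f 0 = b := by
  have hα : 1 < α := by linarith
  have h2 : (0:ℝ) < (2 : ENNReal).toReal := by norm_num
  set φ : ℕ → ℝ → ℝ := fun n t => a n * t * mittagLeffler α 2 (-(l n) * t ^ α)
          + b n * mittagLeffler α 1 (-(l n) * t ^ α) with hφ
  have hφc : ∀ n, Continuous (φ n) := by
    intro n
    have hpc : Continuous fun s : ℝ => s ^ α := Real.continuous_rpow_const (by linarith)
    have h1 := ml_continuous hα (b := 1) le_rfl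
    have h2 := ml_continuous hα (b := 2) (by norm_num)
    simp only [hφ]
    fun_prop
  have hφb : ∀ n, ∀ t ∈ Icc (0:ℝ) T, |φ n t| ≤ T * |a n| + |b n| := by
    intro n t ht
    have hx : 0 ≤ l n * t ^ α := mul_nonneg (hl n).le (Real.rpow_nonneg ht.1 _)
    have b1 := ml_bound_one hα hα2 hx
    have b2 := ml_bound_two hα hα2 hx
    simp only [hφ, neg_mul]
    refine (abs_add_le _ _).trans ?_
    rw [abs_mul, abs_mul, abs_mul, abs_of_nonneg ht.1]
    have ht2 := ht.2
    have ht1 := ht.1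
    calc _ ≤ |a n| * T * 1 + |b n| * 1 := by gcongr
      _ = _ := by ring
  have ha : Summable fun n => |a n| ^ 2 := by
    simpa using (lp.hasSum_norm h2 a).summable
  have hb : Summable fun n => |b n| ^ 2 := by
    simpa using (lp.hasSum_norm h2 b).summable
  have hB : Summable fun n => (T * |a n| + |b n|) ^ 2 := by
    refine Summable.of_nonneg_of_le (fun n => sq_nonneg _) (fun n => ?_)
      ((ha.mul_left (2 * T ^ 2)).add (hb.mul_left 2))
    nlinarith [sq_nonneg (T * |a n| - |b n|)]
  have hmem : ∀ t ∈ Icc (0:ℝ) T, Memℓp (fun n => φ n t) 2 := by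
    intro t ht
    apply memℓp_gen
    refine Summable.of_nonneg_of_le (fun n => by positivity) (fun n => ?_) hB
    simp only [ENNReal.toReal_ofNat, Real.rpow_ofNat, Real.norm_eq_abs]
    gcongr
    exact hφb n t ht
  classical
  set f : ℝ → lp (fun _ : ℕ => ℝ) 2 := fun t =>
    if h : t ∈ Icc (0:ℝ) T then ⟨fun n => φ n t, hmem t h⟩ else 0 with hf
  have hfv : ∀ t ∈ Icc (0:ℝ) T, ∀ n, f t n = φ n t := by
    intro t ht n
    simp only [hf, dif_pos ht]
  refine ⟨f, ?_, hfv, ?_⟩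
  · intro t ht
    rw [ContinuousWithinAt, tendsto_iff_norm_sub_tendsto_zero]
    have key : Tendsto (fun s => ∑' n, (φ n s - φ n t) ^ 2) (𝓝[Icc 0 T] t)
        (𝓝 (∑' _ : ℕ, (0:ℝ))) := by
      apply tendsto_tsum_of_dominated_convergence (hB.mul_left 4)
      · intro n
        have : ContinuousAt (fun s => (φ n s - φ n t) ^ 2) t := by
          have := hφc n
          fun_prop
        have h0 := this.tendsto
        simp only [sub_self, ne_eq, OfNat.ofNat_ne_zero, not_false_eq_true, zero_pow] at h0
        exact h0.mono_left nhdsWithin_le_nhds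
      · filter_upwards [self_mem_nhdsWithin] with s hs n
        have h1 := abs_le.1 (hφb n s hs)
        have h3 := abs_le.1 (hφb n t ht)
        rw [Real.norm_of_nonneg (sq_nonneg _)]
        have : (φ n s - φ n t) ^ 2 ≤ (2 * (T * |a n| + |b n|)) ^ 2 := by
          apply sq_le_sq'
          · linarith [h1.1, h3.2]
          · linarith [h1.2, h3.1]
        linarith
    rw [tsum_zero] at key
    have key2 := key.sqrt
    rw [Real.sqrt_zero] at key2
    refine key2.congr' ?_
    filter_upwards [self_mem_nhdsWithin] with s hs
    have := lp.norm_rpow_eq_tsum h2 (f s - f t)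
    simp only [ENNReal.toReal_ofNat, Real.rpow_ofNat, Real.norm_eq_abs, sq_abs] at this
    rw [← Real.sqrt_sq (norm_nonneg (f s - f t)), this]
    refine congrArg Real.sqrt (tsum_congr fun n => ?_)
    rw [lp.coeFn_sub, Pi.sub_apply, hfv s hs, hfv t ht]
  · ext n
    have h0 : (0:ℝ) ∈ Icc (0:ℝ) T := ⟨le_rfl, hT.le⟩
    rw [hfv 0 h0 n]
    simp only [hφ, Real.zero_rpow (by linarith : α ≠ 0), mul_zero, zero_mul, zero_add]
    have := ml_shift hα 0
    simp only [neg_zero, zero_mul, sub_zero] at this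
    rw [this, mul_one]
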